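/- Suppose the rate-distortion function R(D) is differentiable and strictly convex on (0, D_max), and suppose there exist distinct points x_0, x_1, …, x_k in I such that either (a) for all 0 ≤ i ≠ j ≤ k with j ≠ 0 one has r_j(x_j) > r_j(x_i), or (b) for every permutation π of {0, 1, …, k} other than the identity, Σ_{j=0}^k r_j(x_j) ≠ Σ_{j=0}^k r_j(x_{π(j)}). Then the set of D ∈ (0, D_max) at which the degeneracy condition holds is finite. -/

import Mathlib

open Real MeasureTheory Finset
open scoped Classical

/-- `Q` is a probability mass function on `Fin k`. -/
def IsPmf {k : ℕ} (Q : Fin k → ℝ) : Prop := (∀ j, 0 ≤ Q j) ∧ ∑ j, Q j = 1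

/-- `Λ_{P,Q}(λ) = E_P[ln Σ_j Q_j e^{λ ρ(X,a_j)}]`. -/
noncomputable def Lam {k : ℕ} (P : Measure ℝ) (ρ : ℝ → Fin k → ℝ)
    (Q : Fin k → ℝ) (l : ℝ) : ℝ :=
  ∫ x, Real.log (∑ j, Q j * Real.exp (l * ρ x j)) ∂P

/-- The cost `∫ Σ_j W(x)({a_j}) log₂ (W(x)({a_j}) / Q_j) dP(x)` of a Markov kernel,
with the conventions `0 · log 0 = 0` (automatic in Lean) and value `⊤` if on a set of
positive `P`-measure `w x j > 0` for some `j` with `Q j = 0`. -/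
noncomputable def wCost {k : ℕ} (P : Measure ℝ) (Q : Fin k → ℝ)
    (w : ℝ → Fin k → ℝ) : EReal :=
  if ∀ᵐ x ∂P, ∀ j, 0 < w x j → 0 < Q j then
    ((∫ x, ∑ j, w x j * Real.logb 2 (w x j / Q j) ∂P : ℝ) : EReal)
  else ⊤

/-- `R(P,Q,D)`: infimum over Markov kernels `w` from `ℝ` to `Fin k` with
`∫ Σ_j w x j ρ(x,a_j) dP ≤ D` of the relative-entropy cost. -/
noncomputable def RPQ {k : ℕ} (P : Measure ℝ) (ρ : ℝ → Fin k → ℝ)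
    (Q : Fin k → ℝ) (D : ℝ) : EReal :=
  ⨅ w ∈ {w : ℝ → Fin k → ℝ | Measurable w ∧ (∀ x j, 0 ≤ w x j) ∧
      (∀ x, ∑ j, w x j = 1) ∧ ∫ x, ∑ j, w x j * ρ x j ∂P ≤ D}, wCost P Q w

/-- The rate-distortion function `R(D) = inf_Q R(P,Q,D)`. -/
noncomputable def RofD {k : ℕ} (P : Measure ℝ) (ρ : ℝ → Fin k → ℝ) (D : ℝ) : EReal :=
  ⨅ Q ∈ {Q : Fin k → ℝ | IsPmf Q}, RPQ P ρ Q D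

/-- `D_max = min_j E_P[ρ(X,a_j)]`. -/
noncomputable def Dmax {k : ℕ} (P : Measure ℝ) (ρ : ℝ → Fin k → ℝ) : ℝ :=
  sInf (Set.range fun j => ∫ x, ρ x j ∂P)

/-- The degeneracy condition at distortion level `D`: there are a pmf `Q*` achieving
`R(P,Q*,D) = R(D)` and `λ* < 0` with `Λ'_{P,Q*}(λ*) = D`,
`λ*·D − Λ_{P,Q*}(λ*) = (ln 2)·R(D)`, and `x ↦ Σ_j Q*_j e^{λ* ρ(x,a_j)}` constant
for `P`-almost every `x`. -/
def DegenAt {k : ℕ} (P : Measure ℝ) (ρ : ℝ → Fin k → ℝ) (D : ℝ) : Prop :=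
  ∃ Q : Fin k → ℝ, IsPmf Q ∧ RPQ P ρ Q D = RofD P ρ D ∧
    ∃ l : ℝ, l < 0 ∧ HasDerivAt (Lam P ρ Q) D l ∧
      ((l * D - Lam P ρ Q l : ℝ) : EReal) = (Real.log 2 : EReal) * RofD P ρ D ∧
      ∃ c : ℝ, ∀ᵐ x ∂P, ∑ j, Q j * Real.exp (l * ρ x j) = c

/-! Tilting the optimal output distribution `Q*` exponentially by `λ` gives, for every `λ`, a kernel
of distortion `Λ'(λ)` and cost `(λ Λ'(λ) - Λ(λ)) / ln 2`. Hence `λ Λ'(λ) - Λ(λ) - (ln 2) R(Λ'(λ))`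
is nonnegative, and it vanishes at `λ*`; differentiating there gives
`(λ* - (ln 2) R'(D)) Λ''(λ*) = 0`, where `Λ''(λ*)` is a mean variance, positive because `D < D_max`.
So `λ* = (ln 2) R'(D)`, and by strict convexity `λ*` determines `D`.

Degeneracy at `D` means that `∑ j, Q*(a_j) exp (λ* r_j)` is constant on the support of `P` at points
of continuity, so that the vector `(-c, Q*)` lies in the kernel of the matrix
`(exp (λ* r_j(x_i)))_{i,j}`. The determinant of that matrix is an exponential polynomial in `λ*` in
which the identity permutation contributes an exponent shared by no other permutation, and by
Rolle's theorem such a function has only finitely many zeros. -/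

section ExponentialPolynomials

lemma finite_zeros_of_finite_zeros_deriv {f f' : ℝ → ℝ} (hf : ∀ t, HasDerivAt f (f' t) t)
    (hfin : {t | f' t = 0}.Finite) : {t | f t = 0}.Finite := by
  by_contra hinf
  obtain ⟨s, hs, hcard⟩ := Set.Infinite.exists_subset_card_eq hinf (#hfin.toFinset + 2)
  have hle : #s ≤ #hfin.toFinset + 1 := card_le_of_interleaved fun x hx y hy hxy _ ↦ by
    obtain ⟨z, hz, hz0⟩ := exists_hasDerivAt_eq_zero hxy
      (fun t _ ↦ (hf t).continuousAt.continuousWithinAt) ((hs hx).trans (hs hy).symm) fun t _ ↦ hf t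
    exact ⟨z, by simpa using hz0, hz⟩
  omega

lemma hasDerivAt_mul_exp_mul (a b t : ℝ) :
    HasDerivAt (fun t ↦ a * exp (t * b)) (a * b * exp (t * b)) t := by
  simpa [mul_assoc, mul_comm] using (((hasDerivAt_id t).mul_const b).exp).const_mul a

-- Dividing by one of the exponentials in the sum and differentiating removes it.
theorem finite_zeros_mul_exp_add_sum {ι : Type*} (s : Finset ι) {γ β : ℝ} (c b : ι → ℝ)
    (hγ : γ ≠ 0) (hb : ∀ i ∈ s, b i ≠ β) :
    {t | γ * exp (t * β) + ∑ i ∈ s, c i * exp (t * b i) = 0}.Finite := by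
  induction s using Finset.induction_on generalizing γ β c b with
  | empty => simp [hγ, exp_ne_zero]
  | insert j s hj ih =>
    have hshift : ∀ t x : ℝ, exp (t * x) = exp (t * b j) * exp (t * (x - b j)) := fun t x ↦ by
      rw [← exp_add]; ring_nf
    have hfin := ih (fun i ↦ c i * (b i - b j)) (fun i ↦ b i - b j)
      (mul_ne_zero hγ (sub_ne_zero.2 (hb j (mem_insert_self j s)).symm))
      fun i hi h ↦ hb i (mem_insert_of_mem hi) (sub_left_inj.1 h)
    refine (finite_zeros_of_finite_zeros_deriv (f := fun t ↦ γ * exp (t * (β - b j)) +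
      (c j + ∑ i ∈ s, c i * exp (t * (b i - b j)))) (fun t ↦ ?_) hfin).subset fun t ht ↦ ?_
    · exact (hasDerivAt_mul_exp_mul γ _ t).add
        ((HasDerivAt.fun_sum fun i _ ↦ hasDerivAt_mul_exp_mul (c i) _ t).const_add (c j))
    · have hfactor : γ * exp (t * β) + ∑ i ∈ insert j s, c i * exp (t * b i) =
          exp (t * b j) *
            (γ * exp (t * (β - b j)) + (c j + ∑ i ∈ s, c i * exp (t * (b i - b j)))) := by
        rw [sum_insert hj, hshift t β, sum_congr rfl fun i _ ↦ by rw [hshift t (b i)],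
          mul_add, mul_add, mul_sum]
        simp only [mul_left_comm, mul_comm]
      exact (mul_eq_zero.1 (hfactor.symm.trans ht)).resolve_left (exp_ne_zero _)

theorem finite_zeros_det_exp {n : Type*} [Fintype n] [DecidableEq n] {B : Matrix n n ℝ}
    (hB : ∀ σ : Equiv.Perm n, σ ≠ 1 → ∑ j, B j j ≠ ∑ j, B (σ j) j) :
    {l : ℝ | (Matrix.of fun i j ↦ exp (l * B i j)).det = 0}.Finite := by
  have hdet : ∀ l : ℝ, (Matrix.of fun i j ↦ exp (l * B i j)).det = 1 * exp (l * ∑ j, B j j) +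
      ∑ σ ∈ univ.erase (1 : Equiv.Perm n),
        ((Equiv.Perm.sign σ : ℤ) : ℝ) * exp (l * ∑ j, B (σ j) j) := fun l ↦ by
    rw [Matrix.det_apply', ← add_sum_erase _ _ (mem_univ 1)]
    simp only [Matrix.of_apply, mul_sum, exp_sum, Equiv.Perm.sign_one, Equiv.Perm.one_apply,
      Units.val_one, Int.cast_one]
  simp only [hdet]
  exact finite_zeros_mul_exp_add_sum _ _ _ one_ne_zero fun σ hσ ↦ (hB σ (ne_of_mem_erase hσ)).symm

end ExponentialPolynomials

section SingularMatrices

lemma sum_apply_perm_lt_sum_diag {n R : Type*} [Fintype n] [AddCommMonoid R] [PartialOrder R]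
    [IsOrderedCancelAddMonoid R] {B : Matrix n n R} {j₀ : n}
    (h₀ : ∀ i, B i j₀ = B j₀ j₀) (hlt : ∀ i j, i ≠ j → j ≠ j₀ → B i j < B j j)
    {σ : Equiv.Perm n} (hσ : σ ≠ 1) : ∑ j, B (σ j) j < ∑ j, B j j := by
  obtain ⟨j, hj, hjj₀⟩ := exists_mem_ne (Equiv.Perm.one_lt_card_support_of_ne_one hσ) j₀
  refine sum_lt_sum (fun i _ ↦ ?_) ⟨j, mem_univ j, hlt _ j (Equiv.Perm.mem_support.1 hj) hjj₀⟩
  by_cases hi₀ : i = j₀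
  · rw [hi₀, h₀]
  · by_cases hi : σ i = i
    · rw [hi]
    · exact (hlt _ i hi hi₀).le

lemma det_exp_eq_zero_of_sum_eq_const {k : ℕ} {B : Matrix (Fin (k + 1)) (Fin (k + 1)) ℝ}
    {q : Fin k → ℝ} {l c : ℝ} (hB : ∀ i, B i 0 = 0) (hq : q ≠ 0)
    (hc : ∀ i, ∑ j, q j * exp (l * B i (Fin.succ j)) = c) :
    (Matrix.of fun i j ↦ exp (l * B i j)).det = 0 := by
  refine Matrix.exists_mulVec_eq_zero_iff.1 ⟨Fin.cons (-c) q, fun h ↦ hq ?_, ?_⟩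
  · exact funext fun j ↦ by simpa using congrFun h j.succ
  · ext i
    simp [Matrix.mulVec, dotProduct, Fin.sum_univ_succ, hB, ← hc i, mul_comm]

end SingularMatrices

section Support

variable {X : Type*} [MeasurableSpace X]

theorem withDensity_le_of_setIntegral_le {μ ν : Measure X} [SigmaFinite μ] {U : Set X}
    (hU : MeasurableSet U) {g : X → ℝ} (hg : Measurable g) (hg₀ : ∀ x ∈ U, 0 ≤ g x)
    (hle : ∀ s ⊆ U, MeasurableSet s → ENNReal.ofReal (∫ x in s, g x ∂μ) ≤ ν s) :
    (μ.restrict U).withDensity (fun x ↦ ENNReal.ofReal (g x)) ≤ ν := by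
  refine Measure.le_iff.2 fun s hs ↦ ?_
  rw [← restrict_withDensity hU, Measure.restrict_apply hs]
  refine le_of_forall_lt fun y hy ↦ ?_
  -- The integral in `hle` is `0` unless `g` is integrable, so pass to a subset where it is.
  obtain ⟨t, ht, htU, hyt, htop⟩ := Measure.exists_subset_measure_lt_top (hs.inter hU) hy
  rw [withDensity_apply _ ht] at hyt htop
  have hg₀t : 0 ≤ᵐ[μ.restrict t] g :=
    (ae_restrict_mem ht).mono fun x hx ↦ hg₀ x (htU hx).2
  have hint : IntegrableOn g t μ :=
    (lintegral_ofReal_ne_top_iff_integrable hg.aestronglyMeasurable hg₀t).1 htop.ne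
  calc y < ENNReal.ofReal (∫ x in t, g x ∂μ) := by
        rwa [ofReal_integral_eq_lintegral_ofReal hint hg₀t]
    _ ≤ ν t := hle t (htU.trans Set.inter_subset_right) ht
    _ ≤ ν s := measure_mono (htU.trans Set.inter_subset_left)

theorem subset_support_of_setIntegral_le [TopologicalSpace X] [OpensMeasurableSpace X]
    {μ ν : Measure X} [SigmaFinite μ] [μ.IsOpenPosMeasure] {U : Set X} (hU : IsOpen U)
    {g : X → ℝ} (hg : Measurable g) (hg₀ : ∀ x ∈ U, 0 < g x)
    (hle : ∀ s ⊆ U, MeasurableSet s → ENNReal.ofReal (∫ x in s, g x ∂μ) ≤ ν s) :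
    U ⊆ ν.support := by
  have hac : μ.restrict U ≪ ν :=
    (withDensity_absolutelyContinuous' hg.ennreal_ofReal.aemeasurable
      ((ae_restrict_mem hU.measurableSet).mono fun x hx ↦ by simpa using hg₀ x hx)).trans
    (withDensity_le_of_setIntegral_le hU.measurableSet hg (fun x hx ↦ (hg₀ x hx).le)
      hle).absolutelyContinuous
  calc U = interior U ∩ μ.support := by simp [hU.interior_eq, Measure.support_eq_univ]
    _ ⊆ (μ.restrict U).support := Measure.interior_inter_support
    _ ⊆ ν.support := hac.support_mono

lemma eq_of_ae_eq_const_of_mem_support [TopologicalSpace X] {Y : Type*} [TopologicalSpace Y]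
    [T1Space Y] {μ : Measure X} {f : X → Y} {x : X} {c : Y} (hx : x ∈ μ.support)
    (hf : ContinuousAt f x) (hc : ∀ᵐ y ∂μ, f y = c) : f x = c := by
  by_contra hne
  exact ((Measure.mem_support_iff_forall x).1 hx _ (hf.eventually_ne hne)).ne' hc

end Support

section ExponentialTilt

variable {ι : Type*} [Fintype ι] {p q u : ι → ℝ} {M t : ℝ}

lemma sum_mul_mem_Icc {f : ι → ℝ} {a b : ℝ} (hp : p ∈ stdSimplex ℝ ι)
    (hf : ∀ j, f j ∈ Set.Icc a b) : ∑ j, p j * f j ∈ Set.Icc a b :=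
  (convex_Icc a b).sum_mem (fun j _ ↦ hp.1 j) hp.2 fun j _ ↦ hf j

lemma sum_mul_logb_div_nonneg {b : ℝ} (hb : 1 < b) (hp : p ∈ stdSimplex ℝ ι)
    (hq : q ∈ stdSimplex ℝ ι) (hpq : ∀ j, 0 < p j → 0 < q j) :
    0 ≤ ∑ j, p j * logb b (p j / q j) := by
  have hterm : ∀ j, p j - q j ≤ p j * log (p j / q j) := fun j ↦ by
    rcases (hp.1 j).eq_or_lt with h | h
    · simpa [← h] using hq.1 j
    · have hqj := hpq j h
      calc p j - q j = p j * (1 - (p j / q j)⁻¹) := by field_simp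
        _ ≤ p j * log (p j / q j) := by
          gcongr
          exact one_sub_inv_le_log_of_pos (div_pos h hqj)
  simp only [logb, ← mul_div_assoc, ← sum_div]
  refine div_nonneg ?_ (log_pos hb).le
  calc 0 = ∑ j, (p j - q j) := by rw [sum_sub_distrib, hp.2, hq.2, sub_self]
    _ ≤ ∑ j, p j * log (p j / q j) := sum_le_sum fun j _ ↦ hterm j

/-- The partition function `∑ j, q j * exp (t * u j)` of the weights `q` and the energies `u`; the
physicists' inverse temperature is `-t`. -/
noncomputable def partitionFn (q u : ι → ℝ) (t : ℝ) : ℝ := ∑ j, q j * exp (t * u j)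

/-- The exponential tilt of the weights `q` by `t * u`, normalised to total mass one. -/
noncomputable def tilt (q u : ι → ℝ) (t : ℝ) (j : ι) : ℝ := q j * exp (t * u j) / partitionFn q u t

/-- The mean of `u` under the tilted weights `tilt q u t`. -/
noncomputable def tiltedMean (q u : ι → ℝ) (t : ℝ) : ℝ := ∑ j, tilt q u t j * u j

/-- The variance of `u` under the tilted weights `tilt q u t`. -/
noncomputable def tiltedVar (q u : ι → ℝ) (t : ℝ) : ℝ :=
  ∑ j, tilt q u t j * (u j - tiltedMean q u t) ^ 2

lemma exists_pos_of_mem_stdSimplex (hq : q ∈ stdSimplex ℝ ι) : ∃ j, 0 < q j := by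
  obtain ⟨j, -, hj⟩ := exists_lt_of_sum_lt (s := univ) (f := fun _ ↦ (0 : ℝ)) (g := q)
    (by simp [hq.2])
  exact ⟨j, hj⟩

lemma partitionFn_pos (hq : q ∈ stdSimplex ℝ ι) : 0 < partitionFn q u t := by
  obtain ⟨j, hj⟩ := exists_pos_of_mem_stdSimplex hq
  exact sum_pos' (fun i _ ↦ mul_nonneg (hq.1 i) (exp_pos _).le)
    ⟨j, mem_univ j, mul_pos hj (exp_pos _)⟩

lemma tilt_mem_stdSimplex (hq : q ∈ stdSimplex ℝ ι) : tilt q u t ∈ stdSimplex ℝ ι :=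
  ⟨fun j ↦ div_nonneg (mul_nonneg (hq.1 j) (exp_pos _).le) (partitionFn_pos hq).le, by
    simp only [tilt, ← sum_div]
    exact div_self (partitionFn_pos hq).ne'⟩

lemma tilt_pos_iff (hq : q ∈ stdSimplex ℝ ι) {j : ι} : 0 < tilt q u t j ↔ 0 < q j := by
  rw [tilt, div_pos_iff_of_pos_right (partitionFn_pos hq), mul_pos_iff_of_pos_right (exp_pos _)]

lemma sum_tilt_mul_sub_tiltedMean (hq : q ∈ stdSimplex ℝ ι) :
    ∑ j, tilt q u t j * (u j - tiltedMean q u t) = 0 := by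
  simp only [mul_sub, sum_sub_distrib, ← sum_mul, (tilt_mem_stdSimplex hq).2, one_mul]
  exact sub_self _

lemma tiltedMean_mem_Icc (hq : q ∈ stdSimplex ℝ ι) (hu : ∀ j, |u j| ≤ M) :
    tiltedMean q u t ∈ Set.Icc (-M) M :=
  sum_mul_mem_Icc (tilt_mem_stdSimplex hq) fun j ↦ abs_le.1 (hu j)

lemma tiltedVar_nonneg (hq : q ∈ stdSimplex ℝ ι) : 0 ≤ tiltedVar q u t :=
  sum_nonneg fun j _ ↦ mul_nonneg ((tilt_mem_stdSimplex hq).1 j) (sq_nonneg _)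

lemma tiltedVar_le (hq : q ∈ stdSimplex ℝ ι) (hu : ∀ j, |u j| ≤ M) :
    tiltedVar q u t ≤ (2 * M) ^ 2 := by
  refine (sum_mul_mem_Icc (tilt_mem_stdSimplex hq) fun j ↦ ⟨sq_nonneg _, ?_⟩).2
  have hmean := tiltedMean_mem_Icc (t := t) hq hu
  have hj := abs_le.1 (hu j)
  exact sq_le_sq' (by linarith [hmean.2]) (by linarith [hmean.1])

lemma eq_tiltedMean_of_tiltedVar_eq_zero (hq : q ∈ stdSimplex ℝ ι) (h : tiltedVar q u t = 0)
    {j : ι} (hj : 0 < q j) : u j = tiltedMean q u t := by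
  have hterm := (sum_eq_zero_iff_of_nonneg fun i _ ↦
    mul_nonneg ((tilt_mem_stdSimplex hq).1 i) (sq_nonneg _)).1 h j (mem_univ j)
  exact sub_eq_zero.1 (pow_eq_zero_iff two_ne_zero |>.1
    ((mul_eq_zero.1 hterm).resolve_left ((tilt_pos_iff hq).2 hj).ne'))

lemma hasDerivAt_partitionFn (hq : q ∈ stdSimplex ℝ ι) :
    HasDerivAt (partitionFn q u) (partitionFn q u t * tiltedMean q u t) t := by
  refine (HasDerivAt.fun_sum fun j _ ↦ hasDerivAt_mul_exp_mul (q j) (u j) t).congr_deriv ?_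
  have hZ := (partitionFn_pos (u := u) (t := t) hq).ne'
  rw [tiltedMean, mul_sum]
  exact sum_congr rfl fun j _ ↦ by rw [tilt]; field_simp

lemma hasDerivAt_log_partitionFn (hq : q ∈ stdSimplex ℝ ι) :
    HasDerivAt (fun t ↦ log (partitionFn q u t)) (tiltedMean q u t) t := by
  have hZ := (partitionFn_pos (u := u) (t := t) hq).ne'
  exact ((hasDerivAt_partitionFn hq).log hZ).congr_deriv (mul_div_cancel_left₀ _ hZ)

lemma hasDerivAt_tilt (hq : q ∈ stdSimplex ℝ ι) (j : ι) :
    HasDerivAt (fun t ↦ tilt q u t j) (tilt q u t j * (u j - tiltedMean q u t)) t := by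
  have hZ := (partitionFn_pos (u := u) (t := t) hq).ne'
  refine ((hasDerivAt_mul_exp_mul (q j) (u j) t).div (hasDerivAt_partitionFn hq) hZ).congr_deriv ?_
  rw [tilt]
  field_simp

lemma hasDerivAt_tiltedMean (hq : q ∈ stdSimplex ℝ ι) :
    HasDerivAt (tiltedMean q u) (tiltedVar q u t) t := by
  refine (HasDerivAt.fun_sum fun j _ ↦ (hasDerivAt_tilt hq j).mul_const (u j)).congr_deriv ?_
  calc ∑ j, tilt q u t j * (u j - tiltedMean q u t) * u j
      = tiltedVar q u t + tiltedMean q u t * ∑ j, tilt q u t j * (u j - tiltedMean q u t) := by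
        rw [tiltedVar, mul_sum, ← sum_add_distrib]
        exact sum_congr rfl fun j _ ↦ by ring
    _ = tiltedVar q u t := by rw [sum_tilt_mul_sub_tiltedMean hq, mul_zero, add_zero]

lemma abs_log_partitionFn_le (hq : q ∈ stdSimplex ℝ ι) (hu : ∀ j, |u j| ≤ M) :
    |log (partitionFn q u t)| ≤ M * |t| := by
  have hlip := convex_univ.norm_image_sub_le_of_norm_hasDerivWithin_le (C := M)
    (fun s _ ↦ (hasDerivAt_log_partitionFn (u := u) (t := s) hq).hasDerivWithinAt)
    (fun s _ ↦ abs_le.2 (tiltedMean_mem_Icc hq hu)) (Set.mem_univ 0) (Set.mem_univ t)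
  simpa [partitionFn, hq.2] using hlip

lemma sum_tilt_mul_logb_div (hq : q ∈ stdSimplex ℝ ι) (b : ℝ) :
    ∑ j, tilt q u t j * logb b (tilt q u t j / q j) =
      (t * tiltedMean q u t - log (partitionFn q u t)) / log b := by
  have hZ := partitionFn_pos (u := u) (t := t) hq
  have hterm : ∀ j, tilt q u t j * log (tilt q u t j / q j) =
      t * (tilt q u t j * u j) - tilt q u t j * log (partitionFn q u t) := fun j ↦ by
    rcases (hq.1 j).eq_or_lt with h | h
    · simp [tilt, ← h]
    · have hratio : tilt q u t j / q j = exp (t * u j) / partitionFn q u t := by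
        rw [tilt]; field_simp
      rw [hratio, log_div (exp_ne_zero _) hZ.ne', log_exp]
      ring
  simp only [logb, ← mul_div_assoc, ← sum_div, hterm, sum_sub_distrib, ← mul_sum, ← sum_mul,
    (tilt_mem_stdSimplex hq).2, one_mul, tiltedMean]

end ExponentialTilt

lemma hasDerivAt_integral_of_bounded_deriv {α : Type*} [MeasurableSpace α] {μ : Measure α}
    [IsFiniteMeasure μ] {F F' : ℝ → α → ℝ} {C t : ℝ} (hF : ∀ s, AEStronglyMeasurable (F s) μ)
    (hint : Integrable (F t) μ) (hF' : AEStronglyMeasurable (F' t) μ)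
    (hbound : ∀ s x, |F' s x| ≤ C) (hderiv : ∀ s x, HasDerivAt (fun s ↦ F s x) (F' s x) s) :
    HasDerivAt (fun s ↦ ∫ x, F s x ∂μ) (∫ x, F' t x ∂μ) t :=
  (hasDerivAt_integral_of_dominated_loc_of_deriv_le Filter.univ_mem (.of_forall hF) hint hF'
    (ae_of_all _ fun x s _ ↦ hbound s x) (integrable_const C)
    (ae_of_all _ fun x s _ ↦ hderiv s x)).2

section RateDistortion

variable {k : ℕ} {P : Measure ℝ} {ρ : ℝ → Fin k → ℝ} {Q : Fin k → ℝ} {M D l t : ℝ}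

theorem RofD_nonneg (P : Measure ℝ) (ρ : ℝ → Fin k → ℝ) (D : ℝ) : 0 ≤ RofD P ρ D := by
  refine le_iInf₂ fun Q hQ ↦ le_iInf₂ fun w ⟨_, hw₀, hw₁, _⟩ ↦ ?_
  unfold wCost
  split_ifs with hwQ
  · exact EReal.coe_nonneg.2 <| integral_nonneg_of_ae <| hwQ.mono fun x hx ↦
      sum_mul_logb_div_nonneg one_lt_two ⟨hw₀ x, hw₁ x⟩ hQ hx
  · exact le_top

lemma measurable_tilt (hρ : Measurable ρ) : Measurable fun x ↦ tilt Q (ρ x) t := by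
  unfold tilt partitionFn; fun_prop

lemma measurable_log_partitionFn (hρ : Measurable ρ) :
    Measurable fun x ↦ log (partitionFn Q (ρ x) t) := by
  unfold partitionFn; fun_prop

lemma measurable_tiltedMean (hρ : Measurable ρ) : Measurable fun x ↦ tiltedMean Q (ρ x) t := by
  unfold tiltedMean tilt partitionFn; fun_prop

lemma measurable_tiltedVar (hρ : Measurable ρ) : Measurable fun x ↦ tiltedVar Q (ρ x) t := by
  unfold tiltedVar tiltedMean tilt partitionFn; fun_prop

/-- The expected distortion of the kernel `x ↦ tilt Q (ρ x) t`, which is `Λ'_{P,Q}(t)`. -/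
noncomputable def tiltedDistortion (P : Measure ℝ) (ρ : ℝ → Fin k → ℝ) (Q : Fin k → ℝ) (t : ℝ) :
    ℝ :=
  ∫ x, tiltedMean Q (ρ x) t ∂P

variable [IsProbabilityMeasure P]

lemma integrable_tiltedMean (hρ : Measurable ρ) (hM : ∀ x j, |ρ x j| ≤ M) (hQ : IsPmf Q) :
    Integrable (fun x ↦ tiltedMean Q (ρ x) t) P :=
  .of_mem_Icc (-M) M (measurable_tiltedMean hρ).aemeasurable <|
    ae_of_all _ fun x ↦ tiltedMean_mem_Icc hQ (hM x)

lemma integrable_log_partitionFn (hρ : Measurable ρ) (hM : ∀ x j, |ρ x j| ≤ M) (hQ : IsPmf Q) :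
    Integrable (fun x ↦ log (partitionFn Q (ρ x) t)) P :=
  .of_bound (measurable_log_partitionFn hρ).aestronglyMeasurable (M * |t|) <|
    ae_of_all _ fun x ↦ abs_log_partitionFn_le hQ (hM x)

theorem hasDerivAt_Lam (hρ : Measurable ρ) (hM : ∀ x j, |ρ x j| ≤ M) (hQ : IsPmf Q) :
    HasDerivAt (Lam P ρ Q) (tiltedDistortion P ρ Q t) t :=
  hasDerivAt_integral_of_bounded_deriv (F' := fun t x ↦ tiltedMean Q (ρ x) t)
    (fun _ ↦ (measurable_log_partitionFn hρ).aestronglyMeasurable)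
    (integrable_log_partitionFn hρ hM hQ) (measurable_tiltedMean hρ).aestronglyMeasurable
    (fun _ x ↦ abs_le.2 (tiltedMean_mem_Icc hQ (hM x))) fun _ _ ↦ hasDerivAt_log_partitionFn hQ

theorem hasDerivAt_tiltedDistortion (hρ : Measurable ρ) (hM : ∀ x j, |ρ x j| ≤ M)
    (hQ : IsPmf Q) :
    HasDerivAt (tiltedDistortion P ρ Q) (∫ x, tiltedVar Q (ρ x) t ∂P) t :=
  hasDerivAt_integral_of_bounded_deriv (F' := fun t x ↦ tiltedVar Q (ρ x) t)
    (fun _ ↦ (measurable_tiltedMean hρ).aestronglyMeasurable) (integrable_tiltedMean hρ hM hQ)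
    (measurable_tiltedVar hρ).aestronglyMeasurable
    (fun _ x ↦ (abs_of_nonneg (tiltedVar_nonneg hQ)).trans_le (tiltedVar_le hQ (hM x)))
    fun _ _ ↦ hasDerivAt_tiltedMean hQ

theorem integral_tiltedVar_pos (hρ : Measurable ρ) (hM : ∀ x j, |ρ x j| ≤ M) (hQ : IsPmf Q)
    (hlt : tiltedDistortion P ρ Q t < Dmax P ρ) : 0 < ∫ x, tiltedVar Q (ρ x) t ∂P := by
  have hnonneg : ∀ x, 0 ≤ tiltedVar Q (ρ x) t := fun x ↦ tiltedVar_nonneg hQ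
  have hint : Integrable (fun x ↦ tiltedVar Q (ρ x) t) P :=
    .of_mem_Icc 0 ((2 * M) ^ 2) (measurable_tiltedVar hρ).aemeasurable <|
      ae_of_all _ fun x ↦ ⟨hnonneg x, tiltedVar_le hQ (hM x)⟩
  refine (integral_nonneg hnonneg).lt_of_ne' fun hzero ↦ hlt.not_ge ?_
  obtain ⟨j, hj⟩ := exists_pos_of_mem_stdSimplex hQ
  have hconst : (fun x ↦ ρ x j) =ᵐ[P] fun x ↦ tiltedMean Q (ρ x) t :=
    ((integral_eq_zero_iff_of_nonneg hnonneg hint).1 hzero).mono fun x hx ↦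
      eq_tiltedMean_of_tiltedVar_eq_zero hQ hx hj
  calc Dmax P ρ ≤ ∫ x, ρ x j ∂P := csInf_le (Set.finite_range _).bddBelow ⟨j, rfl⟩
    _ = tiltedDistortion P ρ Q t := integral_congr_ae hconst

lemma wCost_tilt (hρ : Measurable ρ) (hM : ∀ x j, |ρ x j| ≤ M) (hQ : IsPmf Q) :
    wCost P Q (fun x ↦ tilt Q (ρ x) t) =
      ((t * tiltedDistortion P ρ Q t - Lam P ρ Q t) / log 2 : ℝ) := by
  rw [wCost, if_pos (ae_of_all _ fun x j ↦ (tilt_pos_iff hQ).1)]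
  simp only [sum_tilt_mul_logb_div hQ]
  rw [integral_div, integral_sub ((integrable_tiltedMean hρ hM hQ).const_mul t)
    (integrable_log_partitionFn hρ hM hQ), integral_const_mul]
  rfl

theorem log_two_mul_RofD_tiltedDistortion_le (hρ : Measurable ρ) (hM : ∀ x j, |ρ x j| ≤ M)
    (hQ : IsPmf Q) :
    log 2 * (RofD P ρ (tiltedDistortion P ρ Q t)).toReal ≤
      t * tiltedDistortion P ρ Q t - Lam P ρ Q t := by
  have hsimplex : ∀ x, tilt Q (ρ x) t ∈ stdSimplex ℝ (Fin k) := fun x ↦ tilt_mem_stdSimplex hQ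
  have hle : RofD P ρ (tiltedDistortion P ρ Q t) ≤ wCost P Q (fun x ↦ tilt Q (ρ x) t) :=
    (iInf₂_le Q hQ).trans <| iInf₂_le (fun x ↦ tilt Q (ρ x) t)
      ⟨measurable_tilt hρ, fun x ↦ (hsimplex x).1, fun x ↦ (hsimplex x).2, le_rfl⟩
  rw [wCost_tilt hρ hM hQ] at hle
  have hreal := EReal.toReal_le_toReal hle (EReal.bot_lt_zero.trans_le (RofD_nonneg P ρ _)).ne'
    (EReal.coe_ne_top _)
  rwa [EReal.toReal_coe, le_div_iff₀' (log_pos one_lt_two)] at hreal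

theorem log_two_mul_deriv_RofD (hρ : Measurable ρ) (hM : ∀ x j, |ρ x j| ≤ M) (hQ : IsPmf Q)
    (hD : D < Dmax P ρ) (hdiff : DifferentiableAt ℝ (fun s ↦ (RofD P ρ s).toReal) D)
    (hderiv : HasDerivAt (Lam P ρ Q) D l)
    (hval : ((l * D - Lam P ρ Q l : ℝ) : EReal) = (log 2 : EReal) * RofD P ρ D) :
    log 2 * deriv (fun s ↦ (RofD P ρ s).toReal) D = l := by
  set R : ℝ → ℝ := fun s ↦ (RofD P ρ s).toReal
  obtain rfl : tiltedDistortion P ρ Q l = D := (hasDerivAt_Lam hρ hM hQ).unique hderiv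
  have hRl : log 2 * R (tiltedDistortion P ρ Q l) = l * tiltedDistortion P ρ Q l - Lam P ρ Q l := by
    simpa only [EReal.toReal_mul, EReal.toReal_coe] using (congrArg EReal.toReal hval).symm
  have hmin : IsLocalMin (fun t ↦ t * tiltedDistortion P ρ Q t - Lam P ρ Q t -
      log 2 * R (tiltedDistortion P ρ Q t)) l := Filter.Eventually.of_forall fun t ↦ by
    simpa only [hRl, sub_self] using
      sub_nonneg.2 (log_two_mul_RofD_tiltedDistortion_le hρ hM hQ)
  have hderivD := hasDerivAt_tiltedDistortion (P := P) (t := l) hρ hM hQ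
  have hzero := hmin.hasDerivAt_eq_zero <|
    (((hasDerivAt_id l).mul hderivD).sub hderiv).sub
      ((hdiff.hasDerivAt.comp l hderivD).const_mul (log 2))
  have hprod : (l - log 2 * deriv R (tiltedDistortion P ρ Q l)) *
      ∫ x, tiltedVar Q (ρ x) l ∂P = 0 := by
    simp only [id] at hzero
    linarith
  have hslope := (mul_eq_zero.1 hprod).resolve_right (integral_tiltedVar_pos hρ hM hQ hD).ne'
  linarith

lemma DegenAt.det_exp_eq_zero (hρ : Measurable ρ) (hM : ∀ x j, |ρ x j| ≤ M)
    (hD : D < Dmax P ρ) (hdiff : DifferentiableAt ℝ (fun s ↦ (RofD P ρ s).toReal) D)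
    (hdegen : DegenAt P ρ D) {pts : Fin (k + 1) → ℝ} (hpts : ∀ i, pts i ∈ P.support)
    (hcont : ∀ i, ContinuousAt ρ (pts i)) {r : Fin (k + 1) → ℝ → ℝ} (hr0 : ∀ x, r 0 x = 0)
    (hrsucc : ∀ (j : Fin k) (x : ℝ), r j.succ x = ρ x j) :
    (Matrix.of fun i j ↦
      exp (log 2 * deriv (fun s ↦ (RofD P ρ s).toReal) D * r j (pts i))).det = 0 := by
  obtain ⟨Q, hQ, -, l, -, hderiv, hval, c, hc⟩ := hdegen
  rw [log_two_mul_deriv_RofD hρ hM hQ hD hdiff hderiv hval]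
  have hQ0 : Q ≠ 0 := fun h ↦ by simpa [h] using hQ.2
  refine det_exp_eq_zero_of_sum_eq_const (B := fun i j ↦ r j (pts i)) (fun i ↦ hr0 _) hQ0
    (c := c) fun i ↦ ?_
  simp only [hrsucc]
  exact eq_of_ae_eq_const_of_mem_support (f := fun x ↦ ∑ j, Q j * exp (l * ρ x j)) (hpts i)
    (tendsto_finsetSum _ fun j _ ↦
      (((continuousAt_pi.1 (hcont i) j).const_mul l).rexp).const_mul (Q j)) hc

end RateDistortion

theorem stmt_7_general {k : ℕ} {M : ℝ} {ρ : ℝ → Fin k → ℝ} (hρ : Measurable ρ)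
    (hM : ∀ x j, |ρ x j| ≤ M) {P : Measure ℝ} [IsProbabilityMeasure P]
    {r : Fin (k + 1) → ℝ → ℝ} (hr0 : ∀ x, r 0 x = 0)
    (hrsucc : ∀ (j : Fin k) (x : ℝ), r j.succ x = ρ x j)
    (hdiff : ∀ D ∈ Set.Ioo 0 (Dmax P ρ), DifferentiableAt ℝ (fun t ↦ (RofD P ρ t).toReal) D)
    (hconv : StrictConvexOn ℝ (Set.Ioo 0 (Dmax P ρ)) (fun t ↦ (RofD P ρ t).toReal))
    {pts : Fin (k + 1) → ℝ} (hpts : ∀ i, pts i ∈ P.support)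
    (hcont : ∀ i, ContinuousAt ρ (pts i))
    (hsum : ∀ perm : Equiv.Perm (Fin (k + 1)), perm ≠ 1 →
      ∑ j, r j (pts j) ≠ ∑ j, r j (pts (perm j))) :
    {D ∈ Set.Ioo 0 (Dmax P ρ) | DegenAt P ρ D}.Finite := by
  have hfin := finite_zeros_det_exp (B := fun i j ↦ r j (pts i)) hsum
  have hinj : Set.InjOn (fun D ↦ log 2 * deriv (fun t ↦ (RofD P ρ t).toReal) D)
      (Set.Ioo 0 (Dmax P ρ)) :=
    (mul_right_injective₀ (log_pos one_lt_two).ne').comp_injOn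
      (hconv.strictMonoOn_deriv hdiff).injOn
  refine (hfin.subset ?_).of_finite_image (hinj.mono (Set.sep_subset _ _))
  rintro _ ⟨D, ⟨hD, hdegen⟩, rfl⟩
  exact hdegen.det_exp_eq_zero hρ hM hD.2 (hdiff D hD) hpts hcont hr0 hrsucc

/-- **Corollary 2.** If `R(D)` is differentiable and strictly convex on `(0, D_max)`
and there are distinct points `x_0,…,x_k` in `I` satisfying condition (a) or
condition (b) of Theorem 3, then the degeneracy condition holds at only finitely
many `D ∈ (0, D_max)`. -/
theorem stmt_7 {k : ℕ} (hk : 0 < k) (M : ℝ)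
    (ρ : ℝ → Fin k → ℝ) (hρmeas : ∀ j, Measurable fun x => ρ x j)
    (hρnn : ∀ x j, 0 ≤ ρ x j) (hρM : ∀ x j, ρ x j ≤ M)
    (hρmin : ∀ x, ∃ j, ρ x j = 0)
    (P : Measure ℝ) [IsProbabilityMeasure P]
    (a b : ℝ) (hab : a < b)
    (g : ℝ → ℝ) (hg : Measurable g) (hgpos : ∀ x ∈ Set.Ioo a b, 0 < g x)
    (habs : ∀ s ⊆ Set.Ioo a b, MeasurableSet s → ENNReal.ofReal (∫ x in s, g x) ≤ P s)
    (hcont : ∀ j, ContinuousOn (fun x => ρ x j) (Set.Ioo a b))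
    (hDmax : 0 < Dmax P ρ)
    (r : Fin (k + 1) → ℝ → ℝ)
    (hr0 : ∀ x, r 0 x = 0)
    (hrsucc : ∀ (j : Fin k) (x : ℝ), r j.succ x = ρ x j)
    (hdiff : ∀ D ∈ Set.Ioo 0 (Dmax P ρ),
      DifferentiableAt ℝ (fun t => (RofD P ρ t).toReal) D)
    (hconv : StrictConvexOn ℝ (Set.Ioo 0 (Dmax P ρ)) (fun t => (RofD P ρ t).toReal))
    (hcond : ∃ pts : Fin (k + 1) → ℝ, (∀ j, pts j ∈ Set.Ioo a b) ∧
      Function.Injective pts ∧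
      ((∀ i j : Fin (k + 1), i ≠ j → j ≠ 0 → r j (pts i) < r j (pts j)) ∨
       (∀ perm : Equiv.Perm (Fin (k + 1)), perm ≠ 1 →
          ∑ j, r j (pts j) ≠ ∑ j, r j (pts (perm j))))) :
    {D ∈ Set.Ioo 0 (Dmax P ρ) | DegenAt P ρ D}.Finite := by
  obtain ⟨pts, hpts, -, hcond⟩ := hcond
  have hsupp := subset_support_of_setIntegral_le isOpen_Ioo hg hgpos habs
  have hsum : ∀ perm : Equiv.Perm (Fin (k + 1)), perm ≠ 1 →
      ∑ j, r j (pts j) ≠ ∑ j, r j (pts (perm j)) := hcond.elim (fun hlt perm hperm ↦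
    (sum_apply_perm_lt_sum_diag (B := fun i j ↦ r j (pts i)) (by simp [hr0]) hlt hperm).ne') id
  exact stmt_7_general (measurable_pi_iff.2 hρmeas)
    (fun x j ↦ (abs_of_nonneg (hρnn x j)).trans_le (hρM x j)) hr0 hrsucc hdiff hconv
    (fun i ↦ hsupp (hpts i))
    (fun i ↦ continuousAt_pi.2 fun j ↦ (hcont j).continuousAt (isOpen_Ioo.mem_nhds (hpts i))) hsum
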